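/- Every group belonging to the class 𝒮 = 𝒯 ∪ 𝓑₁ ∪ 𝓑₂ is isomorphic to the automorphism group of some bicyclic graph. -/

import Mathlib

open SimpleGraph

/-- The automorphism of `ι → G` given by permuting coordinates by `σ`. -/
def permAut {ι G : Type} [Group G] (σ : Equiv.Perm ι) : MulAut (ι → G) where
  toFun f := f ∘ σ.symm
  invFun f := f ∘ σ
  left_inv f := by funext i; simp
  right_inv f := by funext i; simp
  map_mul' f g := rfl

/-- The action of `Equiv.Perm ι` on `ι → G` by permuting coordinates, as a homomorphism. -/
def permHom (ι G : Type) [Group G] : Equiv.Perm ι →* MulAut (ι → G) where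
  toFun := permAut
  map_one' := by ext f i; rfl
  map_mul' σ τ := by ext f i; rfl

/-- Combine two actions-by-automorphisms into one on the direct product. -/
def autProdHom {Q M N : Type} [Group Q] [Group M] [Group N]
    (φ : Q →* MulAut M) (ψ : Q →* MulAut N) : Q →* MulAut (M × N) where
  toFun q := (φ q).prodCongr (ψ q)
  map_one' := by
    show MulEquiv.prodCongr (φ 1) (ψ 1) = 1
    rw [map_one, map_one]; ext x <;> rfl
  map_mul' a b := by
    show MulEquiv.prodCongr (φ (a * b)) (ψ (a * b)) = _
    rw [map_mul, map_mul]; ext x <;> rfl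

/-- The translation action of an additive group on itself, as permutations. -/
def transPermHom (A : Type) [AddGroup A] : Multiplicative A →* Equiv.Perm A :=
  MulAction.toPermHom (Multiplicative A) A

/-- The action of (the multiplicative version of) an additive group `A` on `A → G`
by translating the coordinates. -/
def transAutHom (A G : Type) [AddGroup A] [Group G] : Multiplicative A →* MulAut (A → G) :=
  (permHom A G).comp (transPermHom A)

/-- The Klein four-group `Z₂ × Z₂` (written multiplicatively). -/
abbrev K4 : Type := Multiplicative (ZMod 2 × ZMod 2)

/-- Projection of the Klein four-group onto its first `Z₂` factor. -/
def fstK : K4 →* Multiplicative (ZMod 2) :=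
  AddMonoidHom.toMultiplicative (AddMonoidHom.fst (ZMod 2) (ZMod 2))

/-- Projection of the Klein four-group onto its second `Z₂` factor. -/
def sndK : K4 →* Multiplicative (ZMod 2) :=
  AddMonoidHom.toMultiplicative (AddMonoidHom.snd (ZMod 2) (ZMod 2))

/-- The wreath product `D ≀ (Z₂ × Z₂) = D⁴ ⋊ (Z₂ × Z₂)`: the four coordinates are indexed by
the elements of `Z₂ × Z₂`, which acts by translating the indices. -/
def wreathK4 (D : Type) [Group D] : Type :=
  (ZMod 2 × ZMod 2 → D) ⋊[transAutHom (ZMod 2 × ZMod 2) D] K4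

instance (D : Type) [Group D] : Group (wreathK4 D) :=
  inferInstanceAs (Group (_ ⋊[transAutHom (ZMod 2 × ZMod 2) D] K4))

/-- The action of `Z₂ × Z₂` on `D⁴ × H² × K²` in which the generator `a = (1,0)` sends
`(d₁,d₂,d₃,d₄,h₁,h₂,k₁,k₂)` to `(d₃,d₄,d₁,d₂,h₂,h₁,k₁,k₂)` and the generator `b = (0,1)` sends
it to `(d₂,d₁,d₄,d₃,h₁,h₂,k₂,k₁)`: the four `D`-coordinates are indexed by
`(0,0), (0,1), (1,0), (1,1) : Z₂ × Z₂` and translated, and the pairs of `H`- resp.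
`K`-coordinates are indexed by `Z₂` and translated by the first resp. second component. -/
def B2act (D H K : Type) [Group D] [Group H] [Group K] :
    K4 →* MulAut ((ZMod 2 × ZMod 2 → D) × (ZMod 2 → H) × (ZMod 2 → K)) :=
  autProdHom (transAutHom (ZMod 2 × ZMod 2) D)
    (autProdHom ((transAutHom (ZMod 2) H).comp fstK) ((transAutHom (ZMod 2) K).comp sndK))

/-- The group `(D⁴ × H² × K²) ⋊ (Z₂ × Z₂)` appearing in the class `𝓑₂`. -/
def B2group (D H K : Type) [Group D] [Group H] [Group K] : Type :=
  ((ZMod 2 × ZMod 2 → D) × (ZMod 2 → H) × (ZMod 2 → K)) ⋊[B2act D H K] K4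

instance (D H K : Type) [Group D] [Group H] [Group K] : Group (B2group D H K) :=
  inferInstanceAs (Group (_ ⋊[B2act D H K] K4))

/-- Jordan's class `𝒯`: the smallest isomorphism-closed class of groups containing the
trivial group and closed under direct products of members and wreath products `G ≀ Sₙ`
(with `Sₙ` permuting the `n` coordinates of `Gⁿ`) for members `G` and `n ≥ 2`. -/
inductive JordanT : ∀ (G : Type) [Group G], Prop where
  | triv : JordanT PUnit
  | congr {G H : Type} [Group G] [Group H] : JordanT G → (G ≃* H) → JordanT H
  | prod {G H : Type} [Group G] [Group H] : JordanT G → JordanT H → JordanT (G × H)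
  | wreath {G : Type} [Group G] (n : ℕ) (hn : 2 ≤ n) :
      JordanT G → JordanT ((Fin n → G) ⋊[permHom (Fin n) G] Equiv.Perm (Fin n))

/-- A graph is bicyclic if it is connected and its number of edges exceeds its number of
vertices by exactly one (i.e. it has cyclomatic number 2). -/
def SimpleGraph.IsBicyclic {V : Type} (G : SimpleGraph V) : Prop :=
  G.Connected ∧ G.edgeSet.ncard = Nat.card V + 1

/-- The class `𝓑₁ = {C × (D ≀ (Z₂ × Z₂)) : C, D ∈ 𝒯}` (closed under isomorphism). -/
def InB1 (G : Type) [Group G] : Prop :=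
  ∃ (C D : Type) (_ : Group C) (_ : Group D),
    JordanT C ∧ JordanT D ∧ Nonempty (G ≃* C × wreathK4 D)

/-- The class `𝓑₂ = {C × ((D⁴ × H² × K²) ⋊ (Z₂ × Z₂)) : C, D, H, K ∈ 𝒯}`
(closed under isomorphism), with the action of `Z₂ × Z₂` given by `B2act`. -/
def InB2 (G : Type) [Group G] : Prop :=
  ∃ (C D H K : Type) (_ : Group C) (_ : Group D) (_ : Group H) (_ : Group K),
    JordanT C ∧ JordanT D ∧ JordanT H ∧ JordanT K ∧ Nonempty (G ≃* C × B2group D H K)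

/-- The class `𝒮 = 𝒯 ∪ 𝓑₁ ∪ 𝓑₂`. -/
def InS (G : Type) [Group G] : Prop :=
  JordanT G ∨ InB1 G ∨ InB2 G

/-!
By Jordan's argument every group in `𝒯` is the automorphism group of a rooted tree: joining the root
to a new root gives larger and larger trees with the same group, so finitely many groups `Gᵢ` are
realized by trees of pairwise different sizes, and joining `nᵢ` copies of the `i`-th tree at a new
root realizes `∏ Gᵢ ≀ S_{nᵢ}`.

Now colour the vertices of a bicyclic graph `Γ` without leaves, and attach to each vertex of the
`i`-th colour a copy of a rooted tree with group `Gᵢ`, where different colours get trees of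
different sizes. The result is bicyclic. Its automorphisms preserve `Γ`, which is its largest
subgraph without leaves, and the colours, so they form the semidirect product of `∏ Gᵢ ^ nᵢ` with
the group of colour-preserving automorphisms of `Γ`. A diamond with four colours has no nontrivial
such automorphism and yields `𝒯`. A theta graph with path lengths 2, 4, 4, coloured by the orbits of
its automorphism group `Z₂ × Z₂`, which have sizes 1, 4, 2, 2, yields `𝓑₂`. Finally `𝓑₁` is the case
`H = K = 1` of `𝓑₂`.
-/

/-! ### Rooted forests given by parent maps -/

/-- A rooted forest on `V`, encoded by its parent map; the roots are the fixed points. -/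
structure ParentForest (V : Type*) where
  parent : V → V
  exists_isFixedPt_iterate : ∀ v, ∃ n, Function.IsFixedPt parent (parent^[n] v)

/-- A rooted tree: a rooted forest with exactly one root. -/
structure ParentTree (V : Type*) extends ParentForest V where
  root : V
  parent_eq_self_iff : ∀ v, parent v = v ↔ v = root

namespace ParentForest

section Basic

variable {V : Type*} (F : ParentForest V)

/-- The vertex `v` is a root of the forest. -/
def IsRoot (v : V) : Prop := F.parent v = v

variable {F} in
theorem induction {P : V → Prop} (isRoot : ∀ v, F.IsRoot v → P v)
    (parent : ∀ v, ¬ F.IsRoot v → P (F.parent v) → P v) (v : V) : P v := by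
  obtain ⟨n, hn⟩ := F.exists_isFixedPt_iterate v
  induction n generalizing v with
  | zero => exact isRoot v hn
  | succ n ih =>
    by_cases hv : F.IsRoot v
    · exact isRoot v hv
    · exact parent v hv (ih (F.parent v) hn)

variable {F} in
theorem isRoot_of_parent_parent_eq {v : V} : F.parent (F.parent v) = v → F.IsRoot v := by
  refine F.induction (P := fun v => F.parent (F.parent v) = v → F.IsRoot v)
    (fun v hv _ => hv) (fun v _ ih h => ?_) v
  exact (ih (congrArg F.parent h)).symm.trans h

/-- The automorphism group of a rooted forest: the permutations commuting with the parent map. -/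
def aut : Subgroup (Equiv.Perm V) where
  carrier := {f | Function.Commute f F.parent}
  mul_mem' hf hg := hf.comp_left hg
  one_mem' := Function.Commute.id_left
  inv_mem' {f} hf v := f.injective <| by
    simp only [hf.eq, Equiv.Perm.inv_def, Equiv.apply_symm_apply]

variable {F} in
theorem apply_parent {f : Equiv.Perm V} (hf : f ∈ F.aut) (v : V) :
    f (F.parent v) = F.parent (f v) :=
  hf v

variable {F} in
theorem isRoot_apply_iff {f : Equiv.Perm V} (hf : f ∈ F.aut) {v : V} :
    F.IsRoot (f v) ↔ F.IsRoot v := by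
  rw [IsRoot, ← apply_parent hf, f.injective.eq_iff, IsRoot]

theorem eq_empty_of_subset_image_parent [Finite V] {S : Set V} (hS : ∀ v ∈ S, ¬ F.IsRoot v)
    (hsub : S ⊆ F.parent '' S) : S = ∅ := by
  -- By finiteness `parent` maps `S` onto `S`, so the path from a vertex of `S` to its root stays
  -- in `S`.
  have himage : S = F.parent '' S :=
    Set.eq_of_subset_of_ncard_le hsub (Set.ncard_image_le S.toFinite) (Set.toFinite _)
  refine Set.eq_empty_of_forall_notMem (F.induction (fun v hv hvS => hS v hvS hv) ?_)
  intro v _ ih hvS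
  exact ih (himage ▸ Set.mem_image_of_mem F.parent hvS)

end Basic

end ParentForest

namespace ParentTree

variable {V : Type*} (T : ParentTree V)

theorem isRoot_iff {v : V} : T.IsRoot v ↔ v = T.root :=
  T.parent_eq_self_iff v

theorem apply_root {f : Equiv.Perm V} (hf : f ∈ T.aut) : f T.root = T.root := by
  rw [← isRoot_iff, ParentForest.isRoot_apply_iff hf, isRoot_iff]

end ParentTree

namespace ParentForest

/-! ### Joining the trees of a forest at a new root -/

section Cone

variable {V : Type*} (F : ParentForest V)

open Classical in
/-- The parent map of `ParentForest.cone`. -/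
noncomputable def coneParent (o : Option V) : Option V :=
  o.bind fun v => if F.IsRoot v then none else some (F.parent v)

theorem coneParent_none : F.coneParent none = none := rfl

variable {F} in
theorem coneParent_some_of_isRoot {v : V} (hv : F.IsRoot v) : F.coneParent (some v) = none :=
  if_pos hv

variable {F} in
theorem coneParent_some_of_not_isRoot {v : V} (hv : ¬ F.IsRoot v) :
    F.coneParent (some v) = some (F.parent v) :=
  if_neg hv

theorem exists_iterate_coneParent_eq_none (o : Option V) : ∃ n, F.coneParent^[n] o = none := by
  rcases o with _ | v
  · exact ⟨0, rfl⟩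
  induction v using F.induction with
  | isRoot v hv => exact ⟨1, coneParent_some_of_isRoot hv⟩
  | parent v hv ih =>
    obtain ⟨n, hn⟩ := ih
    exact ⟨n + 1, by rw [Function.iterate_succ_apply, coneParent_some_of_not_isRoot hv, hn]⟩

theorem coneParent_eq_self_iff (o : Option V) : F.coneParent o = o ↔ o = none := by
  rcases o with _ | v
  · simp only [coneParent_none]
  by_cases hv : F.IsRoot v
  · simp only [coneParent_some_of_isRoot hv, reduceCtorEq]
  · simp only [coneParent_some_of_not_isRoot hv, Option.some.injEq, reduceCtorEq, iff_false]
    exact hv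

/-- The rooted tree obtained from a forest by making its roots the children of a new root. -/
noncomputable def cone : ParentTree (Option V) where
  parent := F.coneParent
  exists_isFixedPt_iterate o := by
    obtain ⟨n, hn⟩ := F.exists_iterate_coneParent_eq_none o
    exact ⟨n, by rw [hn]; rfl⟩
  root := none
  parent_eq_self_iff := F.coneParent_eq_self_iff

/-- `Equiv.optionCongr` as a group homomorphism. -/
def optionCongrHom (V : Type*) : Equiv.Perm V →* Equiv.Perm (Option V) where
  toFun := Equiv.optionCongr
  map_one' := Equiv.optionCongr_refl
  map_mul' f g := Equiv.optionCongr_trans g f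

theorem getD_coneParent_some (v : V) : (F.coneParent (some v)).getD v = F.parent v := by
  by_cases hv : F.IsRoot v
  · rw [coneParent_some_of_isRoot hv, Option.getD_none, hv]
  · rw [coneParent_some_of_not_isRoot hv, Option.getD_some]

variable {F}

theorem optionCongr_mem_aut_cone {f : Equiv.Perm V} :
    Equiv.optionCongr f ∈ F.cone.aut ↔ f ∈ F.aut := by
  constructor
  · intro hf v
    calc f (F.parent v) = (Equiv.optionCongr f (F.coneParent (some v))).getD (f v) := by
          rw [← getD_coneParent_some, Equiv.optionCongr_apply, Option.getD_map]
      _ = (F.coneParent (some (f v))).getD (f v) := congrArg (·.getD (f v)) (hf (some v))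
      _ = F.parent (f v) := F.getD_coneParent_some (f v)
  · rintro hf (_ | v)
    · rfl
    change Equiv.optionCongr f (F.coneParent (some v)) = F.coneParent (some (f v))
    by_cases hv : F.IsRoot v
    · rw [coneParent_some_of_isRoot hv,
        coneParent_some_of_isRoot ((isRoot_apply_iff hf).2 hv)]
      rfl
    · rw [coneParent_some_of_not_isRoot hv,
        coneParent_some_of_not_isRoot (mt (isRoot_apply_iff hf).1 hv), ← apply_parent hf]
      rfl

theorem map_optionCongrHom_aut : F.aut.map (optionCongrHom V) = F.cone.aut := by
  ext g
  constructor
  · rintro ⟨f, hf, rfl⟩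
    exact optionCongr_mem_aut_cone.2 hf
  · intro hg
    classical
    have hcongr : Equiv.optionCongr (Equiv.removeNone g) = g := by
      rw [map_equiv_removeNone, show g none = none from F.cone.apply_root hg, Equiv.swap_self]
      rfl
    exact ⟨Equiv.removeNone g, optionCongr_mem_aut_cone.1 (hcongr.symm ▸ hg), hcongr⟩

variable (F) in
/-- Adding a new root to a forest does not change the automorphism group. -/
noncomputable def autEquivAutCone : F.aut ≃* F.cone.aut :=
  (F.aut.equivMapOfInjective (optionCongrHom V) Equiv.optionCongr_injective).trans
    (MulEquiv.subgroupCongr map_optionCongrHom_aut)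

end Cone

/-! ### Copies of pairwise different trees -/

section Copies

variable {I : Type*} {V : I → Type*} (T : ∀ i, ParentTree (V i)) (B : I → Type*)

/-- The disjoint union of one copy of the tree `T i` for every `i : I` and `b : B i`. -/
def copies : ParentForest (Σ i, B i × V i) where
  parent v := ⟨v.1, v.2.1, (T v.1).parent v.2.2⟩
  exists_isFixedPt_iterate := by
    rintro ⟨i, b, t⟩
    obtain ⟨n, hn⟩ := (T i).exists_isFixedPt_iterate t
    have hsemiconj : Function.Semiconj (fun t => (⟨i, b, t⟩ : Σ i, B i × V i)) (T i).parent
        fun v => ⟨v.1, v.2.1, (T v.1).parent v.2.2⟩ := fun _ => rfl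
    exact ⟨n, hsemiconj.iterate_right n t ▸ hn.map hsemiconj⟩

/-- The roots of `ParentForest.copies T B`. -/
def rootEmbedding : (Σ i, B i) ↪ Σ i, B i × V i where
  toFun x := ⟨x.1, x.2, (T x.1).root⟩
  inj' := by
    rintro ⟨i, b⟩ ⟨j, c⟩ h
    obtain ⟨rfl, h⟩ := Sigma.mk.inj h
    exact congrArg (Sigma.mk i) (congrArg Prod.fst (eq_of_heq h))

/-- The tree of `ParentForest.copies T B` containing a vertex. -/
def component {B : I → Type*} (v : Σ i, B i × V i) : Σ i, B i := ⟨v.1, v.2.1⟩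

variable {T B}

theorem isRoot_copies_iff {v : Σ i, B i × V i} :
    (copies T B).IsRoot v ↔ v = rootEmbedding T B (component v) := by
  obtain ⟨i, b, t⟩ := v
  change (⟨i, b, (T i).parent t⟩ : Σ i, B i × V i) = ⟨i, b, t⟩ ↔
    (⟨i, b, t⟩ : Σ i, B i × V i) = ⟨i, b, (T i).root⟩
  simp only [Sigma.mk.injEq, heq_eq_eq, Prod.mk.injEq, true_and]
  exact (T i).isRoot_iff

theorem isRoot_rootEmbedding (x : Σ i, B i) : (copies T B).IsRoot (rootEmbedding T B x) :=
  isRoot_copies_iff.2 rfl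

theorem setOf_isRoot_copies : {v | (copies T B).IsRoot v} = Set.range (rootEmbedding T B) := by
  ext v
  refine ⟨fun hv => ⟨component v, (isRoot_copies_iff.1 hv).symm⟩, ?_⟩
  rintro ⟨x, rfl⟩
  exact isRoot_rootEmbedding x

theorem card_component (x : Σ i, B i) :
    Nat.card {v : Σ i, B i × V i // component v = x} = Nat.card (V x.1) := by
  refine (Nat.card_congr (Equiv.ofBijective
    (fun t : V x.1 => ⟨⟨x.1, x.2, t⟩, rfl⟩) ⟨fun t u h => ?_, ?_⟩)).symm
  · exact congrArg Prod.snd (eq_of_heq (Sigma.mk.inj (congrArg Subtype.val h)).2)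
  · rintro ⟨⟨i, b, t⟩, rfl⟩
    exact ⟨t, rfl⟩

variable {f : Equiv.Perm (Σ i, B i × V i)}

theorem component_apply_eq_of_mem_aut (hf : f ∈ (copies T B).aut) (v : Σ i, B i × V i) :
    component (f v) = component (f (rootEmbedding T B (component v))) := by
  induction v using (copies T B).induction with
  | isRoot v hv => rw [← isRoot_copies_iff.1 hv]
  | parent v _ ih =>
    calc component (f v) = component ((copies T B).parent (f v)) := rfl
      _ = component (f ((copies T B).parent v)) := by rw [apply_parent hf]
      _ = component (f (rootEmbedding T B (component v))) := ih

theorem component_apply_eq_iff (hf : f ∈ (copies T B).aut) {v w : Σ i, B i × V i} :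
    component (f v) = component (f w) ↔ component v = component w := by
  constructor
  · intro h
    have hinv := (copies T B).aut.inv_mem hf
    have := component_apply_eq_of_mem_aut hinv (f v)
    rw [h, ← component_apply_eq_of_mem_aut hinv (f w)] at this
    simpa only [Equiv.Perm.inv_def, Equiv.symm_apply_apply] using this
  · intro h
    rw [component_apply_eq_of_mem_aut hf v, h, ← component_apply_eq_of_mem_aut hf w]

theorem fst_apply_of_mem_aut (hf : f ∈ (copies T B).aut)
    (hcard : Function.Injective fun i => Nat.card (V i)) (v : Σ i, B i × V i) : (f v).1 = v.1 := by
  have e : {w // component w = component v} ≃ {w // component w = component (f v)} :=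
    f.subtypeEquiv fun w => (component_apply_eq_iff hf).symm
  apply hcard
  change Nat.card (V (component (f v)).1) = Nat.card (V (component v).1)
  rw [← card_component, ← card_component, Nat.card_congr e]

theorem exists_forall_apply_eq_of_mem_aut (hf : f ∈ (copies T B).aut)
    (hcard : Function.Injective fun i => Nat.card (V i)) (i : I) (b : B i) :
    ∃ c : B i, ∀ t, ∃ u, f ⟨i, b, t⟩ = ⟨i, c, u⟩ := by
  have hmk : ∀ t, ∃ c u, f ⟨i, b, t⟩ = ⟨i, c, u⟩ := fun t => by
    have hfst := fst_apply_of_mem_aut hf hcard ⟨i, b, t⟩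
    generalize f ⟨i, b, t⟩ = v at hfst ⊢
    obtain ⟨j, c, u⟩ := v
    obtain rfl : j = i := hfst
    exact ⟨c, u, rfl⟩
  obtain ⟨c, u, hroot⟩ := hmk (T i).root
  refine ⟨c, fun t => ?_⟩
  obtain ⟨c', u', ht⟩ := hmk t
  have hcomp : component (f ⟨i, b, t⟩) = component (f ⟨i, b, (T i).root⟩) :=
    (component_apply_eq_iff hf).2 rfl
  rw [ht, hroot] at hcomp
  obtain rfl : c' = c := eq_of_heq (Sigma.mk.inj hcomp).2
  exact ⟨u', ht⟩

end Copies

section BlockPerm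

variable {I : Type*} {V : I → Type*} {T : ∀ i, ParentTree (V i)} {B : I → Type*}

/-- The automorphism of `ParentForest.copies T B` that moves the copy of `T i` indexed by `b` to the
copy indexed by `σ i b`, and then applies `γ i (σ i b)` to it. -/
def blockPerm (σ : ∀ i, Equiv.Perm (B i)) (γ : ∀ i, B i → (T i).aut) :
    Equiv.Perm (Σ i, B i × V i) :=
  Equiv.sigmaCongrRight fun i => (σ i).prodShear fun b => γ i (σ i b)

theorem blockPerm_apply (σ : ∀ i, Equiv.Perm (B i)) (γ : ∀ i, B i → (T i).aut) (i : I) (b : B i)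
    (t : V i) : blockPerm σ γ ⟨i, b, t⟩ = ⟨i, σ i b, (γ i (σ i b)).1 t⟩ :=
  rfl

theorem blockPerm_mem_aut (σ : ∀ i, Equiv.Perm (B i)) (γ : ∀ i, B i → (T i).aut) :
    blockPerm σ γ ∈ (copies T B).aut := by
  rintro ⟨i, b, t⟩
  exact congrArg (fun u => (⟨i, σ i b, u⟩ : Σ i, B i × V i)) (apply_parent (γ i (σ i b)).2 t)

theorem blockPerm_rootEmbedding (σ : ∀ i, Equiv.Perm (B i)) (γ : ∀ i, B i → (T i).aut)
    (x : Σ i, B i) :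
    blockPerm σ γ (rootEmbedding T B x) =
      rootEmbedding T B (Equiv.Perm.sigmaCongrRightHom B σ x) :=
  congrArg (fun u => (⟨x.1, σ x.1 x.2, u⟩ : Σ i, B i × V i)) ((T x.1).apply_root (γ _ _).2)

theorem blockPerm_injective {σ τ : ∀ i, Equiv.Perm (B i)} {γ δ : ∀ i, B i → (T i).aut}
    (h : blockPerm σ γ = blockPerm τ δ) : σ = τ ∧ γ = δ := by
  have happly : ∀ i b t, σ i b = τ i b ∧ (γ i (σ i b)).1 t = (δ i (τ i b)).1 t := fun i b t => by
    have := DFunLike.congr_fun h ⟨i, b, t⟩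
    simpa only [blockPerm_apply, Sigma.mk.injEq, heq_eq_eq, Prod.mk.injEq, true_and] using this
  obtain rfl : σ = τ := funext fun i => Equiv.ext fun b => (happly i b (T i).root).1
  refine ⟨rfl, funext fun i => funext fun c => Subtype.ext (Equiv.ext fun t => ?_)⟩
  simpa only [Equiv.apply_symm_apply] using (happly i ((σ i).symm c) t).2

theorem exists_blockPerm_eq_of_bijective {f : Equiv.Perm (Σ i, B i × V i)}
    (hf : f ∈ (copies T B).aut) {s : ∀ i, B i → B i} (hs : ∀ i, Function.Bijective (s i))
    {k : ∀ i, B i → V i → V i} (hk : ∀ i b t, f ⟨i, b, t⟩ = ⟨i, s i b, k i b t⟩) :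
    ∃ (σ : ∀ i, Equiv.Perm (B i)) (γ : ∀ i, B i → (T i).aut), blockPerm σ γ = f := by
  have hk_bij (i : I) (b : B i) : Function.Bijective (k i b) := by
    refine ⟨fun t u htu => ?_, fun u => ?_⟩
    · have := f.injective (a₁ := ⟨i, b, t⟩) (a₂ := ⟨i, b, u⟩) (by rw [hk, hk, htu])
      exact congrArg Prod.snd (eq_of_heq (Sigma.mk.inj this).2)
    · obtain ⟨⟨j, c, t⟩, hv⟩ := f.surjective ⟨i, s i b, u⟩
      rw [hk] at hv
      obtain ⟨rfl, hv⟩ := Sigma.mk.inj hv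
      obtain ⟨hc, hu⟩ := Prod.mk.inj (eq_of_heq hv)
      obtain rfl := (hs j).1 hc
      exact ⟨t, hu⟩
  have hk_aut (i : I) (b : B i) : Equiv.ofBijective (k i b) (hk_bij i b) ∈ (T i).aut := by
    intro t
    have := apply_parent hf ⟨i, b, t⟩
    simpa [copies, hk] using this
  let σ : ∀ i, Equiv.Perm (B i) := fun i => Equiv.ofBijective (s i) (hs i)
  refine ⟨σ, fun i c => ⟨_, hk_aut i ((σ i).symm c)⟩, Equiv.ext ?_⟩
  rintro ⟨i, b, t⟩
  rw [blockPerm_apply, Equiv.symm_apply_apply]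
  exact (hk i b t).symm

theorem exists_blockPerm_eq {f : Equiv.Perm (Σ i, B i × V i)} (hf : f ∈ (copies T B).aut)
    (hcard : Function.Injective fun i => Nat.card (V i)) :
    ∃ (σ : ∀ i, Equiv.Perm (B i)) (γ : ∀ i, B i → (T i).aut), blockPerm σ γ = f := by
  choose s k hk using exists_forall_apply_eq_of_mem_aut hf hcard
  refine exists_blockPerm_eq_of_bijective hf (fun i => ⟨fun b c hbc => ?_, fun c => ?_⟩) hk
  · have := (component_apply_eq_iff hf (v := ⟨i, b, (T i).root⟩) (w := ⟨i, c, (T i).root⟩)).1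
      (by rw [hk, hk, hbc]; rfl)
    exact eq_of_heq (Sigma.mk.inj this).2
  · obtain ⟨⟨j, b, t⟩, hv⟩ := f.surjective ⟨i, c, (T i).root⟩
    rw [hk] at hv
    obtain ⟨rfl, hv⟩ := Sigma.mk.inj hv
    exact ⟨b, congrArg Prod.fst (eq_of_heq hv)⟩

end BlockPerm

end ParentForest

/-! ### Blocks permuted by a group -/

section BlockProduct

variable {I : Type*} {B : I → Type} {Q : Type*} [Group Q]

/-- The action on `∀ i, B i → G i` of the permutations of the coordinates preserving every block
`B i`. -/
def coordPermHom (B G : I → Type) [∀ i, Group (G i)] :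
    (∀ i, Equiv.Perm (B i)) →* MulAut (∀ i, B i → G i) where
  toFun σ := MulEquiv.piCongrRight fun i => permHom (B i) (G i) (σ i)
  map_one' := rfl
  map_mul' _ _ := rfl

/-- The semidirect product `(∏ i, G i ^ B i) ⋊ Q`, where `Q` permutes every block `B i` through
`φ`. -/
abbrev BlockProduct (G : I → Type) [∀ i, Group (G i)] (φ : Q →* ∀ i, Equiv.Perm (B i)) : Type _ :=
  (∀ i, B i → G i) ⋊[(coordPermHom B G).comp φ] Q

/-- The base of `BlockProduct G φ` may be replaced by an isomorphic family of groups. -/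
def blockProductCongr {G H : I → Type} [∀ i, Group (G i)] [∀ i, Group (H i)]
    (e : ∀ i, G i ≃* H i) (φ : Q →* ∀ i, Equiv.Perm (B i)) :
    BlockProduct G φ ≃* BlockProduct H φ :=
  SemidirectProduct.congr (MulEquiv.piCongrRight fun i => MulEquiv.piCongrRight fun _ => e i)
    (MulEquiv.refl Q) fun _ => rfl

end BlockProduct

namespace ParentForest

section BlockHom

variable {I : Type*} {V B : I → Type} {T : ∀ i, ParentTree (V i)} {Q : Type*} [Group Q]

theorem blockPerm_mul (σ τ : ∀ i, Equiv.Perm (B i)) (γ δ : ∀ i, B i → (T i).aut) :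
    blockPerm σ γ * blockPerm τ δ = blockPerm (σ * τ) (γ * coordPermHom B _ σ δ) := by
  refine Equiv.ext ?_
  rintro ⟨i, b, t⟩
  have hδ : coordPermHom B (fun i => (T i).aut) σ δ i (σ i (τ i b)) = δ i (τ i b) :=
    congrArg (δ i) ((σ i).symm_apply_apply (τ i b))
  rw [Equiv.Perm.mul_apply]
  simp only [blockPerm_apply, Pi.mul_apply, Equiv.Perm.mul_apply, hδ]
  rfl

/-- The action of `BlockProduct` on the copies of the trees `T i`. -/
def blockHom (T : ∀ i, ParentTree (V i)) (φ : Q →* ∀ i, Equiv.Perm (B i)) :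
    BlockProduct (fun i => (T i).aut) φ →* Equiv.Perm (Σ i, B i × V i) :=
  MonoidHom.mk' (fun m => blockPerm (φ m.right) m.left) fun m n => by
    rw [blockPerm_mul, SemidirectProduct.mul_left, SemidirectProduct.mul_right, map_mul]
    rfl

theorem blockHom_injective {φ : Q →* ∀ i, Equiv.Perm (B i)} (hφ : Function.Injective φ) :
    Function.Injective (blockHom T φ) := fun _ _ h =>
  SemidirectProduct.ext (blockPerm_injective h).2 (hφ (blockPerm_injective h).1)

theorem range_blockHom_id (hcard : Function.Injective fun i => Nat.card (V i)) :
    (blockHom T (MonoidHom.id (∀ i, Equiv.Perm (B i)))).range = (copies T B).aut := by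
  ext f
  constructor
  · rintro ⟨m, rfl⟩
    exact blockPerm_mem_aut _ _
  · intro hf
    obtain ⟨σ, γ, rfl⟩ := exists_blockPerm_eq hf hcard
    exact ⟨⟨γ, σ⟩, rfl⟩

/-- The automorphisms of a disjoint union of copies of trees of different sizes. -/
noncomputable def autCopiesEquiv (T : ∀ i, ParentTree (V i)) (B : I → Type)
    (hcard : Function.Injective fun i => Nat.card (V i)) :
    BlockProduct (fun i => (T i).aut) (MonoidHom.id (∀ i, Equiv.Perm (B i))) ≃* (copies T B).aut :=
  (MonoidHom.ofInjective (blockHom_injective Function.injective_id)).trans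
    (MulEquiv.subgroupCongr (range_blockHom_id hcard))

end BlockHom

end ParentForest

/-! ### Jordan's class consists of automorphism groups of rooted trees -/

/-- The group `G` is the automorphism group of a rooted tree with `n` vertices. -/
def IsAutOfParentTree (n : ℕ) (G : Type*) [Group G] : Prop :=
  ∃ (V : Type) (_ : Finite V) (T : ParentTree V), Nat.card V = n ∧ Nonempty (G ≃* T.aut)

namespace IsAutOfParentTree

theorem congr {n : ℕ} {G H : Type*} [Group G] [Group H] (hG : IsAutOfParentTree n G)
    (e : H ≃* G) : IsAutOfParentTree n H := by
  obtain ⟨V, hV, T, hn, ⟨e'⟩⟩ := hG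
  exact ⟨V, hV, T, hn, ⟨e.trans e'⟩⟩

theorem succ {n : ℕ} {G : Type*} [Group G] (hG : IsAutOfParentTree n G) :
    IsAutOfParentTree (n + 1) G := by
  obtain ⟨V, hV, T, rfl, ⟨e⟩⟩ := hG
  exact ⟨Option V, inferInstance, T.cone, Finite.card_option, ⟨e.trans T.autEquivAutCone⟩⟩

theorem mono {m n : ℕ} {G : Type*} [Group G] (hG : IsAutOfParentTree m G) (hmn : m ≤ n) :
    IsAutOfParentTree n G :=
  Nat.le_induction hG (fun _ _ h => h.succ) n hmn

theorem of_subsingleton (G : Type*) [Group G] [Subsingleton G] : IsAutOfParentTree 1 G := by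
  let T : ParentTree PUnit := ⟨⟨id, fun _ => ⟨0, rfl⟩⟩, PUnit.unit, by simp⟩
  have : Subsingleton T.aut := Subtype.val_injective.subsingleton
  exact ⟨PUnit, inferInstance, T, Nat.card_unique,
    ⟨⟨equivOfSubsingletonOfSubsingleton 1 1, fun _ _ => Subsingleton.elim _ _⟩⟩⟩

end IsAutOfParentTree

section Family

variable {I : Type} [Finite I] {G : I → Type} [∀ i, Group (G i)]

theorem exists_parentTree_family (hG : ∀ i, ∃ n, IsAutOfParentTree n (G i)) :
    ∃ (V : I → Type) (_ : ∀ i, Finite (V i)) (T : ∀ i, ParentTree (V i)),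
      Function.Injective (fun i => Nat.card (V i)) ∧ Nonempty (∀ i, G i ≃* (T i).aut) := by
  choose size hsize using hG
  obtain ⟨bound, hbound⟩ := Set.finite_range size |>.bddAbove
  obtain ⟨index, hindex⟩ := Countable.exists_injective_nat I
  have hlarge (i : I) : IsAutOfParentTree (bound + index i) (G i) :=
    (hsize i).mono (le_add_right (hbound ⟨i, rfl⟩))
  choose V hV T hcard e using hlarge
  refine ⟨V, hV, T, fun i j hij => hindex ?_, ⟨fun i => (e i).some⟩⟩
  simpa only [hcard, Nat.add_left_cancel_iff] using hij

theorem exists_isAutOfParentTree_blockProduct (B : I → Type) [∀ i, Finite (B i)]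
    (hG : ∀ i, ∃ n, IsAutOfParentTree n (G i)) :
    ∃ n, IsAutOfParentTree n (BlockProduct G (MonoidHom.id (∀ i, Equiv.Perm (B i)))) := by
  obtain ⟨V, hV, T, hcard, ⟨e⟩⟩ := exists_parentTree_family hG
  let F := ParentForest.copies T B
  exact ⟨_, Option (Σ i, B i × V i), inferInstance, F.cone, rfl, ⟨(blockProductCongr e _).trans
    ((ParentForest.autCopiesEquiv T B hcard).trans F.autEquivAutCone)⟩⟩

end Family

/-- The index set of the four factors `C`, `D`, `H`, `K` of the groups in `𝓑₂`. -/
inductive Colour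
  | c | d | h | k
  deriving DecidableEq

instance : Fintype Colour := ⟨{.c, .d, .h, .k}, fun i => by cases i <;> decide⟩

/-- A product over `Colour` as an iterated binary product. -/
def colourPiEquiv (X : Colour → Type) [∀ i, Group (X i)] :
    (∀ i, X i) ≃* X .c × X .d × X .h × X .k where
  toFun x := (x .c, x .d, x .h, x .k)
  invFun x
    | .c => x.1
    | .d => x.2.1
    | .h => x.2.2.1
    | .k => x.2.2.2
  left_inv x := by ext i; cases i <;> rfl
  right_inv _ := rfl
  map_mul' _ _ := rfl

/-- The family of groups with members `C`, `D`, `H`, `K`. -/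
abbrev colourGroup (C D H K : Type) : Colour → Type
  | .c => C
  | .d => D
  | .h => H
  | .k => K

instance (C D H K : Type) [Group C] [Group D] [Group H] [Group K] :
    ∀ i, Group (colourGroup C D H K i)
  | .c => inferInstanceAs (Group C)
  | .d => inferInstanceAs (Group D)
  | .h => inferInstanceAs (Group H)
  | .k => inferInstanceAs (Group K)

/-- If every block is a singleton, then `BlockProduct` is a direct product. -/
def blockProductUnitEquiv {I Q : Type*} [Group Q] [Subsingleton Q] (G : I → Type)
    [∀ i, Group (G i)] (φ : Q →* I → Equiv.Perm Unit) :
    BlockProduct G φ ≃* ∀ i, G i where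
  toFun m i := m.left i ()
  invFun g := ⟨fun i _ => g i, 1⟩
  left_inv _ := SemidirectProduct.ext rfl (Subsingleton.elim _ _)
  right_inv _ := rfl
  map_mul' _ _ := rfl

/-- Two trivial factors of a direct product may be omitted. -/
def prodUniqueUnique (G M N : Type) [Group G] [Group M] [Group N] [Unique M] [Unique N] :
    G × M × N ≃* G :=
  ((MulEquiv.refl G).prodCongr MulEquiv.prodUnique).trans MulEquiv.prodUnique

/-- The direct product of two groups as a `BlockProduct`. -/
def blockProductEquivProd (G H : Type) [Group G] [Group H] :
    BlockProduct (colourGroup G H PUnit PUnit) (MonoidHom.id (Colour → Equiv.Perm Unit)) ≃* G × H :=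
  (blockProductUnitEquiv _ _).trans <| (colourPiEquiv _).trans <|
    (MulEquiv.refl G).prodCongr (prodUniqueUnique H PUnit PUnit)

/-- The wreath product `G ≀ Sₙ` as a `BlockProduct`. -/
def blockProductEquivWreath (n : ℕ) (G : Type) [Group G] :
    BlockProduct (fun _ : Unit => G) (MonoidHom.id (Unit → Equiv.Perm (Fin n))) ≃*
      (Fin n → G) ⋊[permHom (Fin n) G] Equiv.Perm (Fin n) :=
  SemidirectProduct.congr (MulEquiv.piUnique _) (MulEquiv.piUnique _) fun _ => rfl

theorem exists_isAutOfParentTree_of_jordanT {G : Type} [Group G] (hG : JordanT G) :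
    ∃ n, IsAutOfParentTree n G := by
  induction hG with
  | triv => exact ⟨1, .of_subsingleton _⟩
  | congr _ e ih =>
    obtain ⟨n, hn⟩ := ih
    exact ⟨n, hn.congr e.symm⟩
  | @prod G H _ _ _ _ ihG ihH =>
    have hfamily : ∀ i, ∃ n, IsAutOfParentTree n (colourGroup G H PUnit PUnit i)
      | .c => ihG
      | .d => ihH
      | .h | .k => ⟨1, .of_subsingleton PUnit⟩
    obtain ⟨n, hn⟩ := exists_isAutOfParentTree_blockProduct (fun _ => Unit) hfamily
    exact ⟨n, hn.congr (blockProductEquivProd _ _).symm⟩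
  | wreath m _ _ ih =>
    obtain ⟨n, hn⟩ := exists_isAutOfParentTree_blockProduct (fun _ : Unit => Fin m) fun _ => ih
    exact ⟨n, hn.congr (blockProductEquivWreath m _).symm⟩

/-! ### Attaching trees to a graph -/

/-- The automorphism group of a graph as a subgroup of the permutations of its vertices. -/
def graphAut {V : Type*} (Γ : SimpleGraph V) : Subgroup (Equiv.Perm V) where
  carrier := {f | ∀ u v, Γ.Adj (f u) (f v) ↔ Γ.Adj u v}
  mul_mem' hf hg u v := (hf _ _).trans (hg u v)
  one_mem' _ _ := Iff.rfl
  inv_mem' {f} hf u v := by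
    simpa only [Equiv.Perm.inv_def, Equiv.apply_symm_apply] using (hf (f⁻¹ u) (f⁻¹ v)).symm

/-- `graphAut` agrees with the library's automorphism group of a graph. -/
def graphAutEquiv {V : Type*} (Γ : SimpleGraph V) : graphAut Γ ≃* (Γ ≃g Γ) where
  toFun f := ⟨f.1, f.2 _ _⟩
  invFun f := ⟨f.toEquiv, fun _ _ => f.map_rel_iff⟩
  left_inv _ := rfl
  right_inv _ := rfl
  map_mul' _ _ := rfl

namespace ParentForest

section AttachTo

variable {V : Type*} (F : ParentForest V) (Γ : SimpleGraph V)

/-- The union of a graph `Γ`, meant to live on the roots of `F`, and the edges of the forest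
`F`. -/
def attachTo : SimpleGraph V := Γ ⊔ SimpleGraph.fromRel fun u v => F.parent u = v

variable {F Γ}

theorem attachTo_adj {u v : V} :
    (F.attachTo Γ).Adj u v ↔ Γ.Adj u v ∨ u ≠ v ∧ (F.parent u = v ∨ F.parent v = u) :=
  Iff.rfl

theorem adj_attachTo_parent {v : V} (hv : ¬ F.IsRoot v) : (F.attachTo Γ).Adj v (F.parent v) :=
  attachTo_adj.2 (Or.inr ⟨Ne.symm hv, Or.inl rfl⟩)

theorem parent_eq_or_of_attachTo_adj (hΓ : Γ.support ⊆ {v | F.IsRoot v}) {u v : V}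
    (hu : ¬ F.IsRoot u) (huv : (F.attachTo Γ).Adj u v) :
    F.parent u = v ∨ ¬ F.IsRoot v ∧ F.parent v = u := by
  rcases attachTo_adj.1 huv with hadj | ⟨_, hparent | hparent⟩
  · exact absurd (hΓ ⟨v, hadj⟩) hu
  · exact Or.inl hparent
  · exact Or.inr ⟨fun hv => huv.ne (hparent.symm.trans hv), hparent⟩

theorem adj_iff_attachTo_adj_and_isRoot (hΓ : Γ.support ⊆ {v | F.IsRoot v}) {u v : V} :
    Γ.Adj u v ↔ (F.attachTo Γ).Adj u v ∧ F.IsRoot u ∧ F.IsRoot v := by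
  refine ⟨fun h => ⟨Or.inl h, hΓ ⟨v, h⟩, hΓ ⟨u, h.symm⟩⟩, ?_⟩
  rintro ⟨hadj | ⟨hne, hparent | hparent⟩, hu, hv⟩
  · exact hadj
  · exact absurd (hu.symm.trans hparent) hne
  · exact absurd (hparent.symm.trans hv) hne

/-- A non-root has only one neighbour which is not one of its children, so from a non-root vertex
of `S` one can descend within `S` forever. -/
theorem isRoot_of_forall_nontrivial_inter_neighborSet [Finite V]
    (hΓ : Γ.support ⊆ {v | F.IsRoot v}) {S : Set V}
    (hS : ∀ v ∈ S, (S ∩ (F.attachTo Γ).neighborSet v).Nontrivial) {v : V} (hv : v ∈ S) :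
    F.IsRoot v := by
  by_contra hroot
  have hempty : {w ∈ S | ¬ F.IsRoot w} = ∅ := by
    refine F.eq_empty_of_subset_image_parent (fun w hw => hw.2) fun w hw => ?_
    obtain ⟨x, ⟨hxS, hwx⟩, hne⟩ := (hS w hw.1).exists_ne (F.parent w)
    obtain ⟨hx, hparent⟩ := (parent_eq_or_of_attachTo_adj hΓ hw.2 hwx).resolve_left hne.symm
    exact ⟨x, ⟨hxS, hx⟩, hparent⟩
  exact Set.eq_empty_iff_forall_notMem.1 hempty v ⟨hv, hroot⟩

theorem isRoot_apply_of_mem_graphAut [Finite V] (hΓ : Γ.support ⊆ {v | F.IsRoot v})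
    (hdeg : ∀ v, F.IsRoot v → (Γ.neighborSet v).Nontrivial) {f : Equiv.Perm V}
    (hf : f ∈ graphAut (F.attachTo Γ)) {v : V} (hv : F.IsRoot v) : F.IsRoot (f v) := by
  refine isRoot_of_forall_nontrivial_inter_neighborSet (S := f '' {w | F.IsRoot w}) hΓ ?_
    ⟨v, hv, rfl⟩
  rintro _ ⟨w, hw, rfl⟩
  refine ((hdeg w hw).image f.injective).mono ?_
  rintro _ ⟨x, hwx, rfl⟩
  exact ⟨⟨x, hΓ ⟨w, hwx.symm⟩, rfl⟩, (hf w x).2 (Or.inl hwx)⟩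

theorem isRoot_apply_iff_of_mem_graphAut [Finite V] (hΓ : Γ.support ⊆ {v | F.IsRoot v})
    (hdeg : ∀ v, F.IsRoot v → (Γ.neighborSet v).Nontrivial) {f : Equiv.Perm V}
    (hf : f ∈ graphAut (F.attachTo Γ)) {v : V} : F.IsRoot (f v) ↔ F.IsRoot v := by
  refine ⟨fun h => ?_, isRoot_apply_of_mem_graphAut hΓ hdeg hf⟩
  simpa only [Equiv.Perm.inv_def, Equiv.symm_apply_apply] using
    isRoot_apply_of_mem_graphAut hΓ hdeg (inv_mem hf) h

theorem mem_aut_of_mem_graphAut [Finite V] (hΓ : Γ.support ⊆ {v | F.IsRoot v})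
    (hdeg : ∀ v, F.IsRoot v → (Γ.neighborSet v).Nontrivial) {f : Equiv.Perm V}
    (hf : f ∈ graphAut (F.attachTo Γ)) : f ∈ F.aut := by
  refine F.induction (fun v hv => ?_) fun v hv ih => ?_
  · have hfv : F.IsRoot (f v) := isRoot_apply_of_mem_graphAut hΓ hdeg hf hv
    exact (congrArg f hv).trans hfv.symm
  · have hfv : ¬ F.IsRoot (f v) := mt (isRoot_apply_iff_of_mem_graphAut hΓ hdeg hf).1 hv
    refine ((parent_eq_or_of_attachTo_adj hΓ hfv
      ((hf _ _).2 (adj_attachTo_parent hv))).resolve_right ?_).symm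
    rintro ⟨-, hparent⟩
    exact hv (isRoot_of_parent_parent_eq (f.injective (ih.trans hparent)))

theorem graphAut_attachTo [Finite V] (hΓ : Γ.support ⊆ {v | F.IsRoot v})
    (hdeg : ∀ v, F.IsRoot v → (Γ.neighborSet v).Nontrivial) :
    graphAut (F.attachTo Γ) = F.aut ⊓ graphAut Γ := by
  ext f
  constructor
  · intro hf
    refine ⟨mem_aut_of_mem_graphAut hΓ hdeg hf, fun u v => ?_⟩
    simp only [adj_iff_attachTo_adj_and_isRoot hΓ, hf u v,
      isRoot_apply_iff_of_mem_graphAut hΓ hdeg hf]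
  · rintro ⟨hf, hfΓ⟩ u v
    simp only [attachTo_adj, hfΓ u v, ← apply_parent hf, f.injective.eq_iff, ne_eq]

theorem connected_attachTo [Nonempty V]
    (hconn : ∀ u v, F.IsRoot u → F.IsRoot v → Γ.Reachable u v) : (F.attachTo Γ).Connected := by
  have exists_root (v : V) : ∃ r, F.IsRoot r ∧ (F.attachTo Γ).Reachable v r := by
    induction v using F.induction with
    | isRoot v hv => exact ⟨v, hv, .rfl⟩
    | parent v hv ih =>
      obtain ⟨r, hr, hreach⟩ := ih
      exact ⟨r, hr, (adj_attachTo_parent hv).reachable.trans hreach⟩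
  refine ⟨fun u v => ?_⟩
  obtain ⟨r, hr, hur⟩ := exists_root u
  obtain ⟨s, hs, hvs⟩ := exists_root v
  exact (hur.trans ((hconn r s hr hs).mono le_sup_left)).trans hvs.symm

theorem edgeSet_attachTo :
    (F.attachTo Γ).edgeSet = Γ.edgeSet ∪ (fun v => s(v, F.parent v)) '' {v | F.IsRoot v}ᶜ := by
  ext e
  induction e with | _ u v
  constructor
  · rw [mem_edgeSet, attachTo_adj]
    rintro (h | ⟨hne, rfl | rfl⟩)
    · exact Or.inl h
    · exact Or.inr ⟨u, hne.symm, rfl⟩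
    · exact Or.inr ⟨v, hne, Sym2.eq_swap⟩
  · rintro (h | ⟨w, hw, h⟩)
    · exact Or.inl h
    · exact h ▸ adj_attachTo_parent hw

theorem injOn_mk_parent : Set.InjOn (fun v => s(v, F.parent v)) {v | F.IsRoot v}ᶜ := by
  intro v hv w _ h
  rcases Sym2.eq_iff.1 h with ⟨hvw, _⟩ | ⟨hvw, hwv⟩
  · exact hvw
  · exact absurd (isRoot_of_parent_parent_eq (hwv ▸ hvw.symm)) hv

theorem ncard_edgeSet_attachTo [Finite V] (hΓ : Γ.support ⊆ {v | F.IsRoot v}) :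
    (F.attachTo Γ).edgeSet.ncard + {v | F.IsRoot v}.ncard = Γ.edgeSet.ncard + Nat.card V := by
  have hdisj : Disjoint Γ.edgeSet ((fun v => s(v, F.parent v)) '' {v | F.IsRoot v}ᶜ) := by
    rw [Set.disjoint_right]
    rintro _ ⟨v, hv, rfl⟩ h
    exact hv (hΓ ⟨_, h⟩)
  rw [edgeSet_attachTo, Set.ncard_union_eq hdisj, injOn_mk_parent.ncard_image,
    ← Set.ncard_add_ncard_compl {v | F.IsRoot v}]
  omega

end AttachTo

end ParentForest

/-! ### Bicyclic graphs with trees attached to a core -/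

/-- The group `G` is the automorphism group of a finite bicyclic graph. -/
def IsAutOfBicyclic (G : Type*) [Group G] : Prop :=
  ∃ (V : Type) (_ : Fintype V) (Δ : SimpleGraph V),
    Δ.IsBicyclic ∧ Nonempty (G ≃* (Δ ≃g Δ))

theorem IsAutOfBicyclic.congr {G H : Type*} [Group G] [Group H] (hG : IsAutOfBicyclic G)
    (e : H ≃* G) : IsAutOfBicyclic H := by
  obtain ⟨V, hV, Δ, hΔ, ⟨e'⟩⟩ := hG
  exact ⟨V, hV, Δ, hΔ, ⟨e.trans e'⟩⟩

theorem support_map_subset_range {V W : Type*} (ι : V ↪ W) (Γ : SimpleGraph V) :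
    (Γ.map ι).support ⊆ Set.range ι := by
  rintro _ ⟨_, h⟩
  obtain ⟨u, _, _, rfl, _⟩ := (SimpleGraph.map_adj ..).1 h
  exact ⟨u, rfl⟩

theorem mem_graphAut_map_iff {V W : Type*} (ι : V ↪ W) (Γ : SimpleGraph V) {f : Equiv.Perm W}
    {g : Equiv.Perm V} (hfg : ∀ v, f (ι v) = ι (g v)) :
    f ∈ graphAut (Γ.map ι) ↔ g ∈ graphAut Γ := by
  refine ⟨fun hf u v => ?_, fun hg x y => ?_⟩
  · simpa only [hfg, SimpleGraph.map_adj_apply] using hf (ι u) (ι v)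
  · simp only [SimpleGraph.map_adj]
    refine (g.exists_congr fun a => g.exists_congr fun b => ?_).symm
    rw [hg, ← hfg, ← hfg, f.injective.eq_iff, f.injective.eq_iff]

namespace ParentForest

theorem isBicyclic_attachTo_map {V W : Type} [Finite W] {F : ParentForest W} {ι : V ↪ W}
    (hι : {v | F.IsRoot v} = Set.range ι) {Γ : SimpleGraph V} (hΓ : Γ.IsBicyclic) :
    (F.attachTo (Γ.map ι)).IsBicyclic := by
  obtain ⟨hconn, hcard⟩ := hΓ
  have : Nonempty W := hconn.nonempty.map ι
  refine ⟨connected_attachTo fun u v hu hv => ?_, ?_⟩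
  · obtain ⟨a, rfl⟩ : u ∈ Set.range ι := hι ▸ hu
    obtain ⟨b, rfl⟩ : v ∈ Set.range ι := hι ▸ hv
    exact (hconn a b).map (SimpleGraph.Embedding.map ι Γ).toHom
  · have hedges := F.ncard_edgeSet_attachTo (hι ▸ support_map_subset_range ι Γ)
    rw [hι, Set.ncard_range_of_injective ι.injective, SimpleGraph.edgeSet_map,
      Set.ncard_image_of_injective _ ι.sym2Map.injective, hcard] at hedges
    omega

section Core

variable {I : Type} {V B : I → Type} {T : ∀ i, ParentTree (V i)}
  {Q : Type*} [Group Q] {Γ : SimpleGraph (Σ i, B i)} {φ : Q →* ∀ i, Equiv.Perm (B i)}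

theorem range_blockHom (hcard : Function.Injective fun i => Nat.card (V i))
    (hrange : φ.range = (graphAut Γ).comap (Equiv.Perm.sigmaCongrRightHom B)) :
    (blockHom T φ).range = (copies T B).aut ⊓ graphAut (Γ.map (rootEmbedding T B)) := by
  have hmem (σ : ∀ i, Equiv.Perm (B i)) (γ : ∀ i, B i → (T i).aut) :
      blockPerm σ γ ∈ graphAut (Γ.map (rootEmbedding T B)) ↔ σ ∈ φ.range := by
    rw [hrange, mem_graphAut_map_iff _ _ (blockPerm_rootEmbedding σ γ), Subgroup.mem_comap]
  ext f
  constructor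
  · rintro ⟨m, rfl⟩
    exact ⟨blockPerm_mem_aut _ _, (hmem _ _).2 ⟨m.right, rfl⟩⟩
  · rintro ⟨hf, hfΓ⟩
    obtain ⟨σ, γ, rfl⟩ := exists_blockPerm_eq hf hcard
    obtain ⟨q, rfl⟩ := (hmem σ γ).1 hfΓ
    exact ⟨⟨γ, q⟩, rfl⟩

theorem graphAut_attachTo_copies [Finite (Σ i, B i × V i)]
    (hcard : Function.Injective fun i => Nat.card (V i))
    (hdeg : ∀ x, (Γ.neighborSet x).Nontrivial)
    (hrange : φ.range = (graphAut Γ).comap (Equiv.Perm.sigmaCongrRightHom B)) :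
    graphAut ((copies T B).attachTo (Γ.map (rootEmbedding T B))) = (blockHom T φ).range := by
  rw [range_blockHom hcard hrange]
  refine graphAut_attachTo ?_ fun v hv => ?_
  · rw [setOf_isRoot_copies]
    exact support_map_subset_range _ _
  · rw [isRoot_copies_iff.1 hv]
    refine ((hdeg (component v)).image (rootEmbedding T B).injective).mono ?_
    rintro _ ⟨x, hx, rfl⟩
    exact (SimpleGraph.map_adj_apply ..).2 hx

end Core

end ParentForest

theorem isAutOfBicyclic_blockProduct {I : Type} [Finite I] {B : I → Type} [∀ i, Finite (B i)]
    {Q : Type*} [Group Q] {Γ : SimpleGraph (Σ i, B i)} {φ : Q →* ∀ i, Equiv.Perm (B i)}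
    (hΓ : Γ.IsBicyclic) (hdeg : ∀ x, (Γ.neighborSet x).Nontrivial) (hφ : Function.Injective φ)
    (hrange : φ.range = (graphAut Γ).comap (Equiv.Perm.sigmaCongrRightHom B))
    {G : I → Type} [∀ i, Group (G i)] (hG : ∀ i, JordanT (G i)) :
    IsAutOfBicyclic (BlockProduct G φ) := by
  obtain ⟨V, hV, T, hcard, ⟨e⟩⟩ :=
    exists_parentTree_family fun i => exists_isAutOfParentTree_of_jordanT (hG i)
  let Δ := (ParentForest.copies T B).attachTo (Γ.map (ParentForest.rootEmbedding T B))
  have haut : (ParentForest.blockHom T φ).range = graphAut Δ :=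
    (ParentForest.graphAut_attachTo_copies hcard hdeg hrange).symm
  exact ⟨_, Fintype.ofFinite _, Δ,
    ParentForest.isBicyclic_attachTo_map ParentForest.setOf_isRoot_copies hΓ,
    ⟨(blockProductCongr e φ).trans <|
      (MonoidHom.ofInjective (ParentForest.blockHom_injective hφ)).trans <|
      (MulEquiv.subgroupCongr haut).trans (graphAutEquiv Δ)⟩⟩

/-! ### The diamond -/

/-- The diamond, i.e. the complete graph on the four colours without the edge `hk`. -/
def diamond : SimpleGraph (Σ _ : Colour, Unit) :=
  SimpleGraph.fromRel fun x _ => x.1 = .c ∨ x.1 = .d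

instance : DecidableRel diamond.Adj := inferInstanceAs (DecidableRel (SimpleGraph.fromRel _).Adj)

theorem isBicyclic_diamond : diamond.IsBicyclic := by
  refine ⟨?_, ?_⟩
  · have hc (x) : diamond.Reachable ⟨.c, ()⟩ x := by
      rcases eq_or_ne ⟨.c, ()⟩ x with rfl | hx
      · exact .rfl
      · exact SimpleGraph.Adj.reachable ⟨hx, Or.inl (Or.inl rfl)⟩
    exact SimpleGraph.connected_iff_exists_forall_reachable _ |>.2 ⟨_, hc⟩
  · rw [Set.ncard_eq_toFinset_card', Nat.card_eq_fintype_card]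
    decide +kernel

theorem nontrivial_neighborSet_diamond :
    ∀ x, (diamond.neighborSet x).Nontrivial := by
  unfold Set.Nontrivial
  decide +kernel

theorem isAutOfBicyclic_of_jordanT {G : Type} [Group G] (hG : JordanT G) : IsAutOfBicyclic G := by
  have hfamily : ∀ i, JordanT (colourGroup G PUnit PUnit PUnit i)
    | .c => hG
    | .d | .h | .k => .triv
  exact (isAutOfBicyclic_blockProduct isBicyclic_diamond nontrivial_neighborSet_diamond
    (φ := MonoidHom.id (Colour → Equiv.Perm Unit)) Function.injective_id (Subsingleton.elim _ _)
    hfamily).congr ((blockProductEquivProd G PUnit).trans MulEquiv.prodUnique).symm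

/-! ### The theta graph -/

/-- The vertices of each colour of the theta graph. -/
abbrev thetaVertices : Colour → Type
  | .c => Unit
  | .d => ZMod 2 × ZMod 2
  | .h => ZMod 2
  | .k => ZMod 2

instance : ∀ i, Fintype (thetaVertices i)
  | .c => inferInstanceAs (Fintype Unit)
  | .d => inferInstanceAs (Fintype (ZMod 2 × ZMod 2))
  | .h | .k => inferInstanceAs (Fintype (ZMod 2))

instance : ∀ i, DecidableEq (thetaVertices i)
  | .c => inferInstanceAs (DecidableEq Unit)
  | .d => inferInstanceAs (DecidableEq (ZMod 2 × ZMod 2))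
  | .h | .k => inferInstanceAs (DecidableEq (ZMod 2))

/-- One orientation of the edges of `theta`. -/
def thetaRel : (Σ i, thetaVertices i) → (Σ i, thetaVertices i) → Bool
  | ⟨.c, _⟩, ⟨.h, _⟩ => true
  | ⟨.h, i⟩, ⟨.d, a⟩ => i = a.1
  | ⟨.k, j⟩, ⟨.d, a⟩ => j = a.2
  | _, _ => false

/-- The theta graph in which the vertices `h₀`, `h₁` of degree 3 are joined by a path of length 2
through `c` and by two paths of length 4, through `d₀ⱼ`, `kⱼ`, `d₁ⱼ` for `j = 0, 1`. -/
def theta : SimpleGraph (Σ i, thetaVertices i) :=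
  SimpleGraph.fromRel fun x y => thetaRel x y

instance : DecidableRel theta.Adj := inferInstanceAs (DecidableRel (SimpleGraph.fromRel _).Adj)

theorem theta_adj_h_d {i : ZMod 2} {a : ZMod 2 × ZMod 2} :
    theta.Adj ⟨.h, i⟩ ⟨.d, a⟩ ↔ i = a.1 := by
  simp [theta, thetaRel]

theorem theta_adj_k_d {j : ZMod 2} {a : ZMod 2 × ZMod 2} :
    theta.Adj ⟨.k, j⟩ ⟨.d, a⟩ ↔ j = a.2 := by
  simp [theta, thetaRel]

theorem connected_theta : theta.Connected := by
  have hh (i) : theta.Reachable ⟨.c, ()⟩ ⟨.h, i⟩ :=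
    SimpleGraph.Adj.reachable ⟨by simp, Or.inl rfl⟩
  have hd (a) : theta.Reachable ⟨.c, ()⟩ ⟨.d, a⟩ :=
    (hh a.1).trans (theta_adj_h_d.2 rfl).reachable
  have hk (j) : theta.Reachable ⟨.c, ()⟩ ⟨.k, j⟩ :=
    (hd (0, j)).trans (theta_adj_k_d.2 rfl).symm.reachable
  refine SimpleGraph.connected_iff_exists_forall_reachable _ |>.2 ⟨⟨.c, ()⟩, ?_⟩
  rintro ⟨_ | _ | _ | _, x⟩
  exacts [.rfl, hd x, hh x, hk x]

theorem isBicyclic_theta : theta.IsBicyclic := by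
  refine ⟨connected_theta, ?_⟩
  rw [Set.ncard_eq_toFinset_card', Nat.card_eq_fintype_card]
  decide +kernel

theorem nontrivial_neighborSet_theta : ∀ x, (theta.neighborSet x).Nontrivial := by
  unfold Set.Nontrivial
  decide +kernel

/-- The action of `Z₂ × Z₂` on the theta graph by swapping the `hᵢ` and swapping the `kⱼ`. -/
def thetaAction : K4 →* ∀ i, Equiv.Perm (thetaVertices i) :=
  MonoidHom.pi fun
    | .c => 1
    | .d => transPermHom (ZMod 2 × ZMod 2)
    | .h => (transPermHom (ZMod 2)).comp fstK
    | .k => (transPermHom (ZMod 2)).comp sndK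

theorem thetaAction_injective : Function.Injective thetaAction := fun a b hab => by
  have := DFunLike.congr_fun (congrFun hab .d) 0
  exact add_right_cancel (b := (0 : ZMod 2 × ZMod 2)) this

theorem thetaRel_thetaAction (a : K4) (x y : Σ i, thetaVertices i) :
    thetaRel (Equiv.Perm.sigmaCongrRightHom _ (thetaAction a) x)
      (Equiv.Perm.sigmaCongrRightHom _ (thetaAction a) y) = thetaRel x y := by
  obtain ⟨_ | _ | _ | _, x⟩ := x <;> obtain ⟨_ | _ | _ | _, y⟩ := y
  case h.d => exact decide_eq_decide.2 (add_right_inj a.toAdd.1)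
  case k.d => exact decide_eq_decide.2 (add_right_inj a.toAdd.2)
  all_goals rfl

theorem perm_zmod_two_apply : ∀ (σ : Equiv.Perm (ZMod 2)) (i : ZMod 2), σ i = σ 0 + i := by
  decide +kernel

theorem exists_thetaAction_eq {σ : ∀ i, Equiv.Perm (thetaVertices i)}
    (hσ : Equiv.Perm.sigmaCongrRightHom _ σ ∈ graphAut theta) : ∃ a, thetaAction a = σ := by
  have hh (i : ZMod 2) : σ .h 0 + i = σ .h i := (perm_zmod_two_apply (σ .h) i).symm
  have hk (j : ZMod 2) : σ .k 0 + j = σ .k j := (perm_zmod_two_apply (σ .k) j).symm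
  have hd₁ (a : ZMod 2 × ZMod 2) : σ .h a.1 = (σ .d a).1 :=
    theta_adj_h_d.1 ((hσ ⟨.h, a.1⟩ ⟨.d, a⟩).2 (theta_adj_h_d.2 rfl))
  have hd₂ (a : ZMod 2 × ZMod 2) : σ .k a.2 = (σ .d a).2 :=
    theta_adj_k_d.1 ((hσ ⟨.k, a.2⟩ ⟨.d, a⟩).2 (theta_adj_k_d.2 rfl))
  refine ⟨Multiplicative.ofAdd (σ .h 0, σ .k 0), funext fun i => Equiv.ext fun x => ?_⟩
  cases i with
  | c => rfl
  | d => exact Prod.ext ((hh x.1).trans (hd₁ x)) ((hk x.2).trans (hd₂ x))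
  | h => exact hh x
  | k => exact hk x

theorem range_thetaAction :
    thetaAction.range = (graphAut theta).comap (Equiv.Perm.sigmaCongrRightHom _) := by
  refine le_antisymm ?_ fun σ hσ => exists_thetaAction_eq hσ
  rintro _ ⟨a, rfl⟩ x y
  simp only [theta, SimpleGraph.fromRel_adj, thetaRel_thetaAction, ne_eq,
    EmbeddingLike.apply_eq_iff_eq]

/-- The block product attached to the theta graph is the group appearing in `𝓑₂`. -/
def blockProductEquivB2group (G : Colour → Type) [∀ i, Group (G i)] :
    BlockProduct G thetaAction ≃* G .c × B2group (G .d) (G .h) (G .k) where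
  toFun m := (m.left .c (), ⟨(m.left .d, m.left .h, m.left .k), m.right⟩)
  invFun x := ⟨(colourPiEquiv _).symm (fun _ => x.1, x.2.left), x.2.right⟩
  left_inv m := SemidirectProduct.ext ((colourPiEquiv _).symm_apply_apply m.left) rfl
  right_inv _ := rfl
  map_mul' _ _ := rfl

theorem isAutOfBicyclic_prod_B2group {C D H K : Type} [Group C] [Group D] [Group H] [Group K]
    (hC : JordanT C) (hD : JordanT D) (hH : JordanT H) (hK : JordanT K) :
    IsAutOfBicyclic (C × B2group D H K) := by
  have hfamily : ∀ i, JordanT (colourGroup C D H K i)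
    | .c => hC
    | .d => hD
    | .h => hH
    | .k => hK
  exact (isAutOfBicyclic_blockProduct isBicyclic_theta nontrivial_neighborSet_theta
    thetaAction_injective range_thetaAction hfamily).congr
    (blockProductEquivB2group (colourGroup C D H K)).symm

theorem InB2.isAutOfBicyclic {G : Type} [Group G] (hG : InB2 G) : IsAutOfBicyclic G := by
  obtain ⟨C, D, H, K, _, _, _, _, hC, hD, hH, hK, ⟨e⟩⟩ := hG
  exact (isAutOfBicyclic_prod_B2group hC hD hH hK).congr e

/-- The wreath product `D ≀ (Z₂ × Z₂)` is the case `H = K = 1` of the group appearing in `𝓑₂`. -/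
def wreathK4EquivB2group (D : Type) [Group D] : wreathK4 D ≃* B2group D PUnit PUnit :=
  SemidirectProduct.congr (prodUniqueUnique _ _ _).symm (MulEquiv.refl K4) fun _ => rfl

theorem InB1.inB2 {G : Type} [Group G] (hG : InB1 G) : InB2 G := by
  obtain ⟨C, D, _, _, hC, hD, ⟨e⟩⟩ := hG
  exact ⟨C, D, PUnit, PUnit, _, _, _, _, hC, hD, .triv, .triv,
    ⟨e.trans ((MulEquiv.refl C).prodCongr (wreathK4EquivB2group D))⟩⟩

/-- Every group in the class `𝒮 = 𝒯 ∪ 𝓑₁ ∪ 𝓑₂` is isomorphic to the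
automorphism group of some bicyclic graph. -/
theorem S_realizable_as_aut_bicyclic (G : Type) [Group G] (hG : InS G) :
    ∃ (V : Type) (_ : Fintype V) (Δ : SimpleGraph V),
      Δ.IsBicyclic ∧ Nonempty (G ≃* (Δ ≃g Δ)) := by
  rcases hG with hT | hB1 | hB2
  · exact isAutOfBicyclic_of_jordanT hT
  · exact hB1.inB2.isAutOfBicyclic
  · exact hB2.isAutOfBicyclic
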